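/- Let (X, T) be a dynamical system. The following statements are equivalent: (1) (K(X), T_K) is Devaney chaotic; (2) for every λ ∈ (0,1], (𝔽^{=λ}(X), T_F|_{𝔽^{=λ}(X)}) is Devaney chaotic; (3) there exists λ ∈ (0,1] such that (𝔽^{=λ}(X), T_F|_{𝔽^{=λ}(X)}) is Devaney chaotic. -/

import Mathlib

open Metric Set TopologicalSpace Filter Function
open scoped Classical

variable {X Y : Type*}

/-- Extended Hausdorff metric on subsets of `X`: the usual Hausdorff distance between
two nonempty sets (or two empty sets), and `diam X` when exactly one of them is empty. -/
noncomputable def eHd (X : Type*) [MetricSpace X] (A B : Set X) : ℝ :=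
  if (A.Nonempty ∧ B.Nonempty) ∨ (A = ∅ ∧ B = ∅) then Metric.hausdorffDist A B
  else Metric.diam (Set.univ : Set X)

/-- The `α`-cut of a fuzzy set. -/
def cut (A : X → ℝ) (α : ℝ) : Set X := {x | α ≤ A x}

/-- The levelwise metric `d_∞` on fuzzy sets. -/
noncomputable def dinf [MetricSpace X] (A B : X → ℝ) : ℝ :=
  sSup {r : ℝ | ∃ α ∈ Set.Ioc (0:ℝ) 1, r = eHd X (cut A α) (cut B α)}

/-- A fuzzy set: an upper semicontinuous function into `[0,1]`. -/
def IsFuzzy [TopologicalSpace X] (A : X → ℝ) : Prop :=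
  (∀ x, A x ∈ Set.Icc (0:ℝ) 1) ∧ UpperSemicontinuous A

/-- `𝔽₀(X)`: nonempty (not identically zero) u.s.c. fuzzy sets. -/
def F0 (X : Type*) [TopologicalSpace X] : Set (X → ℝ) :=
  {A | IsFuzzy A ∧ ∃ x, A x ≠ 0}

/-- `𝔽^{=λ}(X)`: u.s.c. fuzzy sets with maximum value `λ`. -/
def Feq (X : Type*) [TopologicalSpace X] (lam : ℝ) : Set (X → ℝ) :=
  {A | IsFuzzy A ∧ (∃ x, A x = lam) ∧ ∀ x, A x ≤ lam}

/-- `𝔽^{≥λ}(X)`: u.s.c. fuzzy sets attaining a value `≥ λ`. -/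
def Fge (X : Type*) [TopologicalSpace X] (lam : ℝ) : Set (X → ℝ) :=
  {A | IsFuzzy A ∧ ∃ x, lam ≤ A x}

/-- Zadeh's extension of `T`. -/
noncomputable def zadeh (T : X → X) (A : X → ℝ) : X → ℝ :=
  fun x => sSup (A '' (T ⁻¹' {x}))

/-- The induced map `T_K` on the hyperspace of nonempty closed (= compact) subsets. -/
def hyper [TopologicalSpace X] (T : X → X) (hT : Continuous T)
    (A : NonemptyCompacts X) : NonemptyCompacts X :=
  ⟨⟨T '' A, A.isCompact.image hT⟩, A.nonempty.image T⟩

/-- Topological transitivity. -/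
def TopTrans [TopologicalSpace Y] (S : Y → Y) : Prop :=
  ∀ U V : Set Y, IsOpen U → IsOpen V → U.Nonempty → V.Nonempty →
    ∃ n : ℕ, (S^[n] '' U ∩ V).Nonempty

/-- Weak mixing: `S × S` is transitive. -/
def TopWeakMix [TopologicalSpace Y] (S : Y → Y) : Prop :=
  TopTrans (fun p : Y × Y => (S p.1, S p.2))

/-- Topological transitivity of `S` restricted to `C`, for the topology induced by the
(pseudo)metric `ρ`, phrased via metric balls. -/
def TransOn (ρ : Y → Y → ℝ) (S : Y → Y) (C : Set Y) : Prop :=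
  ∀ A ∈ C, ∀ B ∈ C, ∀ ε > 0, ∃ n : ℕ, ∃ E ∈ C, ρ E A < ε ∧ ρ (S^[n] E) B < ε

/-- Weak mixing of `S` restricted to `C`, phrased via metric balls. -/
def WeakMixOn (ρ : Y → Y → ℝ) (S : Y → Y) (C : Set Y) : Prop :=
  ∀ A₁ ∈ C, ∀ A₂ ∈ C, ∀ B₁ ∈ C, ∀ B₂ ∈ C, ∀ ε > 0, ∃ n : ℕ,
    ∃ E₁ ∈ C, ∃ E₂ ∈ C, ρ E₁ A₁ < ε ∧ ρ E₂ A₂ < ε ∧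
      ρ (S^[n] E₁) B₁ < ε ∧ ρ (S^[n] E₂) B₂ < ε


/-- Devaney chaos on a topological space: transitivity plus dense periodic points. -/
def DevaneyTop [TopologicalSpace Y] (S : Y → Y) : Prop :=
  TopTrans S ∧ Dense {y : Y | ∃ n : ℕ, 1 ≤ n ∧ S^[n] y = y}

/-- Devaney chaos of `S` restricted to `C`, phrased via metric balls:
transitivity plus density of periodic points of the subsystem. -/
def DevaneyOn (ρ : Y → Y → ℝ) (S : Y → Y) (C : Set Y) : Prop :=
  TransOn ρ S C ∧
    ∀ A ∈ C, ∀ ε > 0, ∃ P ∈ C, (∃ n : ℕ, 1 ≤ n ∧ S^[n] P = P) ∧ ρ P A < ε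

/-! Top cuts map `𝔽^{=λ}(X)` onto `K(X)` without increasing distances and intertwine `T_F` with
`T_K`, so chaos passes from `T_F` to `T_K`.

Conversely, testing transitivity of `T_K` against sets `K ⊆ U` and sets `K` meeting both `V` and
`V'` shows that `T` hits `V` and `V'` from `U` at a common time. As `T` has dense range (periodic
sets are images), this makes `T` weakly mixing, and by Furstenberg's argument finitely many pairs
of open sets are hit at a common time. Compactness gives two fuzzy sets of the same height finite
skeletons `(x i, a i)` and `(y i, a i)` with common heights. The fuzzy set with value `a i` at a
point `z i` near `x i` whose `n`-th iterate is near `y i` then witnesses transitivity of `T_F`;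
replacing `z i` by a periodic closed set near `x i` gives a periodic fuzzy set. -/

section HittingTimes

/-- The set of times at which some orbit starting in `U` is in `V`; time `0` is included. -/
def hitTimes (T : Y → Y) (U V : Set Y) : Set ℕ :=
  {n | (U ∩ T^[n] ⁻¹' V).Nonempty}

theorem hitTimes_mono {T : Y → Y} {U U' V V' : Set Y} (hU : U ⊆ U') (hV : V ⊆ V') :
    hitTimes T U V ⊆ hitTimes T U' V' :=
  fun _ h => h.mono (inter_subset_inter hU (preimage_mono hV))

theorem hitTimes_preimage_iterate_subset (T : Y → Y) (k : ℕ) (U V : Set Y) :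
    hitTimes T (T^[k] ⁻¹' U) (T^[k] ⁻¹' V) ⊆ hitTimes T U V := by
  rintro n ⟨x, hxU, hxV⟩
  refine ⟨T^[k] x, hxU, ?_⟩
  rwa [mem_preimage, (Function.Commute.refl T).iterate_iterate n k x]

theorem hitTimes_prod (T : Y → Y) (U U' V V' : Set Y) :
    hitTimes (fun p : Y × Y => (T p.1, T p.2)) (U ×ˢ U') (V ×ˢ V') =
      hitTimes T U V ∩ hitTimes T U' V' := by
  ext n
  have iterate_eq : (fun p : Y × Y => (T p.1, T p.2))^[n] = Prod.map T^[n] T^[n] :=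
    Prod.map_iterate T T n
  have inter_preimage_eq : U ×ˢ U' ∩ Prod.map T^[n] T^[n] ⁻¹' V ×ˢ V' =
      (U ∩ T^[n] ⁻¹' V) ×ˢ (U' ∩ T^[n] ⁻¹' V') := by
    rw [← prod_inter_prod]
    rfl
  simp only [hitTimes, mem_ofPred_eq, iterate_eq, inter_preimage_eq, prod_nonempty_iff,
    mem_inter_iff]

variable [TopologicalSpace Y] {T : Y → Y}

theorem topTrans_iff_hitTimes_nonempty :
    TopTrans T ↔ ∀ U V : Set Y, IsOpen U → IsOpen V → U.Nonempty → V.Nonempty →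
      (hitTimes T U V).Nonempty := by
  simp only [TopTrans, image_inter_nonempty_iff]
  rfl

theorem topWeakMix_iff_hitTimes_inter_nonempty :
    TopWeakMix T ↔ ∀ U V U' V' : Set Y, IsOpen U → IsOpen V → IsOpen U' → IsOpen V' →
      U.Nonempty → V.Nonempty → U'.Nonempty → V'.Nonempty →
      (hitTimes T U V ∩ hitTimes T U' V').Nonempty := by
  rw [TopWeakMix, topTrans_iff_hitTimes_nonempty]
  constructor
  · intro h U V U' V' hU hV hU' hV' hUne hVne hU'ne hV'ne
    rw [← hitTimes_prod]
    exact h _ _ (hU.prod hU') (hV.prod hV') (hUne.prod hU'ne) (hVne.prod hV'ne)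
  · rintro h O W hO hW ⟨⟨u, u'⟩, hu⟩ ⟨⟨v, v'⟩, hv⟩
    obtain ⟨U, U', hU, hU', huU, huU', hUO⟩ := isOpen_prod_iff.1 hO u u' hu
    obtain ⟨V, V', hV, hV', hvV, hvV', hVW⟩ := isOpen_prod_iff.1 hW v v' hv
    have common_time := h U V U' V' hU hV hU' hV' ⟨u, huU⟩ ⟨v, hvV⟩ ⟨u', huU'⟩ ⟨v', hvV'⟩
    rw [← hitTimes_prod] at common_time
    exact common_time.mono (hitTimes_mono hUO hVW)

/-- Furstenberg's intersection lemma. -/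
theorem TopWeakMix.exists_hitTimes_subset_inter (h : TopWeakMix T) (hT : Continuous T)
    {U V U' V' : Set Y} (hU : IsOpen U) (hV : IsOpen V) (hU' : IsOpen U') (hV' : IsOpen V')
    (hUne : U.Nonempty) (hVne : V.Nonempty) (hU'ne : U'.Nonempty) (hV'ne : V'.Nonempty) :
    ∃ O W : Set Y, IsOpen O ∧ IsOpen W ∧ O.Nonempty ∧ W.Nonempty ∧
      hitTimes T O W ⊆ hitTimes T U V ∩ hitTimes T U' V' := by
  obtain ⟨k, hOne, hWne⟩ := topWeakMix_iff_hitTimes_inter_nonempty.1 h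
    U U' V V' hU hU' hV hV' hUne hU'ne hVne hV'ne
  refine ⟨U ∩ T^[k] ⁻¹' U', V ∩ T^[k] ⁻¹' V', hU.inter (hU'.preimage (hT.iterate k)),
    hV.inter (hV'.preimage (hT.iterate k)), hOne, hWne, subset_inter ?_ ?_⟩
  · exact hitTimes_mono inter_subset_left inter_subset_left
  · exact (hitTimes_mono inter_subset_right inter_subset_right).trans
      (hitTimes_preimage_iterate_subset T k U' V')

theorem TopWeakMix.exists_forall_mem_hitTimes {ι : Type*} [Finite ι] (h : TopWeakMix T)
    (hT : Continuous T) {U V : ι → Set Y} (hU : ∀ i, IsOpen (U i)) (hV : ∀ i, IsOpen (V i))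
    (hUne : ∀ i, (U i).Nonempty) (hVne : ∀ i, (V i).Nonempty) :
    ∃ n, ∀ i, n ∈ hitTimes T (U i) (V i) := by
  cases nonempty_fintype ι
  rcases isEmpty_or_nonempty ι with _ | ⟨⟨i₀⟩⟩
  · exact ⟨0, isEmptyElim⟩
  have dominated (s : Finset ι) : ∃ O W : Set Y, IsOpen O ∧ IsOpen W ∧ O.Nonempty ∧ W.Nonempty ∧
      ∀ i ∈ s, hitTimes T O W ⊆ hitTimes T (U i) (V i) := by
    induction s using Finset.induction_on with
    | empty => exact ⟨U i₀, V i₀, hU i₀, hV i₀, hUne i₀, hVne i₀, by simp⟩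
    | insert j s _ ih =>
      obtain ⟨O, W, hO, hW, hOne, hWne, hOW⟩ := ih
      obtain ⟨O', W', hO', hW', hO'ne, hW'ne, hO'W'⟩ := h.exists_hitTimes_subset_inter hT
        (hU j) (hV j) hO hW (hUne j) (hVne j) hOne hWne
      refine ⟨O', W', hO', hW', hO'ne, hW'ne, Finset.forall_mem_insert _ _ _ |>.2 ⟨?_, ?_⟩⟩
      · exact hO'W'.trans inter_subset_left
      · exact fun i hi => hO'W'.trans (inter_subset_right.trans (hOW i hi))
  obtain ⟨O, W, hO, hW, hOne, hWne, hOW⟩ := dominated Finset.univ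
  obtain ⟨n, hn, -⟩ := topWeakMix_iff_hitTimes_inter_nonempty.1 h
    O W O W hO hW hO hW hOne hWne hOne hWne
  exact ⟨n, fun i => hOW i (Finset.mem_univ i) hn⟩

theorem denseRange_iterate (hdense : DenseRange T) (hT : Continuous T) (n : ℕ) :
    DenseRange T^[n] := by
  induction n with
  | zero => exact denseRange_id
  | succ n ih =>
    rw [iterate_succ']
    exact hdense.comp ih hT

end HittingTimes

section Factor

theorem exists_common_period {ι : Type*} [Finite ι] {S : Y → Y} {y : ι → Y}
    (hy : ∀ i, y i ∈ periodicPts S) : ∃ n, 1 ≤ n ∧ ∀ i, IsPeriodicPt S n (y i) := by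
  cases nonempty_fintype ι
  choose N hN_pos hN using hy
  exact ⟨∏ i, N i, Finset.prod_pos fun i _ => hN_pos i,
    fun i => (hN i).trans_dvd (Finset.dvd_prod_of_mem N (Finset.mem_univ i))⟩

theorem DevaneyOn.devaneyTop_of_semiconj {Z : Type*} [PseudoMetricSpace Z] {ρ : Y → Y → ℝ}
    {S : Y → Y} {C : Set Y} {R : Z → Z} (h : DevaneyOn ρ S C) (hS : MapsTo S C C) {π : C → Z}
    (hπ_surj : Surjective π) (hπ_dist : ∀ A B : C, dist (π A) (π B) ≤ ρ A B)
    (hπ_semiconj : Semiconj π (hS.restrict S C C) R) : DevaneyTop R := by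
  have π_iterate (n : ℕ) (A : C) : π ⟨S^[n] A, hS.iterate n A.2⟩ = R^[n] (π A) := by
    rw [← (hπ_semiconj.iterate_right n).eq, hS.iterate_restrict n]
    rfl
  constructor
  · rintro U V hU hV ⟨u, hu⟩ ⟨v, hv⟩
    obtain ⟨A, rfl⟩ := hπ_surj u
    obtain ⟨B, rfl⟩ := hπ_surj v
    obtain ⟨εU, hεU, hballU⟩ := Metric.isOpen_iff.1 hU _ hu
    obtain ⟨εV, hεV, hballV⟩ := Metric.isOpen_iff.1 hV _ hv
    obtain ⟨n, E, hE, hEA, hEB⟩ := h.1 A A.2 B B.2 (min εU εV) (lt_min hεU hεV)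
    refine ⟨n, R^[n] (π ⟨E, hE⟩), mem_image_of_mem _ (hballU ?_), hballV ?_⟩
    · exact (hπ_dist _ _).trans_lt (hEA.trans_le (min_le_left _ _))
    · rw [← π_iterate]
      exact (hπ_dist _ _).trans_lt (hEB.trans_le (min_le_right _ _))
  · rw [Metric.dense_iff]
    intro z ε hε
    obtain ⟨A, rfl⟩ := hπ_surj z
    obtain ⟨P, hP, ⟨n, hn, hPn⟩, hPA⟩ := h.2 A A.2 ε hε
    refine ⟨π ⟨P, hP⟩, (hπ_dist _ _).trans_lt hPA, n, hn, ?_⟩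
    rw [← π_iterate]
    simp only [hPn]

end Factor

section Hyperspace

variable [TopologicalSpace X] {T : X → X} {hT : Continuous T}

theorem coe_hyper_iterate (K : NonemptyCompacts X) (n : ℕ) :
    ((hyper T hT)^[n] K : Set X) = T^[n] '' K := by
  induction n with
  | zero => simp
  | succ n ih =>
    rw [iterate_succ_apply', iterate_succ', image_comp, ← ih]
    rfl

theorem exists_coe_subset_of_dense {S : Set (NonemptyCompacts X)} (hS : Dense S) {U : Set X}
    (hU : IsOpen U) (hUne : U.Nonempty) : ∃ K ∈ S, (K : Set X) ⊆ U := by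
  obtain ⟨u, hu⟩ := hUne
  obtain ⟨K, hKU, hKS⟩ := dense_iff_inter_open.1 hS _ (NonemptyCompacts.isOpen_subsets_of_isOpen hU)
    ⟨{u}, by simpa using hu⟩
  exact ⟨K, hKS, hKU⟩

theorem denseRange_of_dense_periodicPts_hyper (h : Dense (periodicPts (hyper T hT))) :
    DenseRange T := by
  refine dense_iff_inter_open.2 fun U hU hUne => ?_
  obtain ⟨_, hK, hKU⟩ := exists_coe_subset_of_dense (h.mono periodicPts_subset_range) hU hUne
  obtain ⟨L, rfl⟩ := hK
  obtain ⟨x, hx⟩ := L.nonempty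
  exact ⟨T x, hKU (mem_image_of_mem T hx), mem_range_self x⟩

theorem hitTimes_inter_nonempty_of_topTrans_hyper (h : TopTrans (hyper T hT)) {U V V' : Set X}
    (hU : IsOpen U) (hV : IsOpen V) (hV' : IsOpen V')
    (hUne : U.Nonempty) (hVne : V.Nonempty) (hV'ne : V'.Nonempty) :
    (hitTimes T U V ∩ hitTimes T U V').Nonempty := by
  obtain ⟨u, hu⟩ := hUne
  obtain ⟨v, hv⟩ := hVne
  obtain ⟨v', hv'⟩ := hV'ne
  have hits_of_meets {K : NonemptyCompacts X} {n : ℕ} {W : Set X} (hKU : (K : Set X) ⊆ U)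
      (hKW : (((hyper T hT)^[n] K : Set X) ∩ W).Nonempty) : n ∈ hitTimes T U W := by
    rw [coe_hyper_iterate, image_inter_nonempty_iff] at hKW
    exact hKW.mono (inter_subset_inter_left _ hKU)
  obtain ⟨n, _, ⟨K, hKU, rfl⟩, hKV, hKV'⟩ := h
    {K | (K : Set X) ⊆ U} {K | ((K : Set X) ∩ V).Nonempty ∧ ((K : Set X) ∩ V').Nonempty}
    (NonemptyCompacts.isOpen_subsets_of_isOpen hU)
    ((NonemptyCompacts.isOpen_inter_nonempty_of_isOpen hV).inter
      (NonemptyCompacts.isOpen_inter_nonempty_of_isOpen hV'))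
    ⟨{u}, by simpa using hu⟩ ⟨{v} ⊔ {v'}, ⟨v, by simp, hv⟩, ⟨v', by simp, hv'⟩⟩
  exact ⟨n, hits_of_meets hKU hKV, hits_of_meets hKU hKV'⟩

theorem topWeakMix_of_topTrans_hyper (h : TopTrans (hyper T hT)) (hdense : DenseRange T) :
    TopWeakMix T := by
  refine topWeakMix_iff_hitTimes_inter_nonempty.2
    fun U V U' V' hU hV hU' hV' hUne hVne hU'ne hV'ne => ?_
  obtain ⟨k, hk, -⟩ := hitTimes_inter_nonempty_of_topTrans_hyper h hU hU' hU' hUne hU'ne hU'ne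
  have hTk : Continuous T^[k] := hT.iterate k
  have preimage_nonempty : (T^[k] ⁻¹' V').Nonempty :=
    (denseRange_iterate hdense hT k).exists_mem_open hV' hV'ne
  refine (hitTimes_inter_nonempty_of_topTrans_hyper h (hU.inter (hU'.preimage hTk)) hV
    (hV'.preimage hTk) hk hVne preimage_nonempty).mono (inter_subset_inter ?_ ?_)
  · exact hitTimes_mono inter_subset_left subset_rfl
  · exact (hitTimes_mono inter_subset_right subset_rfl).trans
      (hitTimes_preimage_iterate_subset T k U' V')

end Hyperspace

section Cuts

theorem le_of_forall_cut_subset {A B : X → ℝ} (hB : ∀ x, 0 ≤ B x)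
    (h : ∀ α > 0, cut A α ⊆ cut B α) : A ≤ B := by
  intro x
  rcases le_or_gt (A x) 0 with hAx | hAx
  · exact hAx.trans (hB x)
  · exact h (A x) hAx (le_refl (A x))

theorem eq_of_forall_cut_eq {A B : X → ℝ} (hA : ∀ x, 0 ≤ A x) (hB : ∀ x, 0 ≤ B x)
    (h : ∀ α > 0, cut A α = cut B α) : A = B :=
  le_antisymm (le_of_forall_cut_subset hB fun α hα => (h α hα).subset)
    (le_of_forall_cut_subset hA fun α hα => (h α hα).superset)

variable [TopologicalSpace X] {A : X → ℝ} {lam : ℝ}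

theorem upperSemicontinuous_iff_isClosed_cut (hA : ∀ x, 0 ≤ A x) :
    UpperSemicontinuous A ↔ ∀ α > 0, IsClosed (cut A α) := by
  refine upperSemicontinuous_iff_isClosed_preimage.trans ⟨fun h α _ => h α, fun h α => ?_⟩
  rcases le_or_gt α 0 with hα | hα
  · convert isClosed_univ (X := X)
    exact eq_univ_of_forall fun x => hα.trans (hA x)
  · exact h α hα

theorem mem_Feq_iff_nonempty_cut (hlam : 0 < lam) :
    A ∈ Feq X lam ↔ IsFuzzy A ∧ ∀ α > 0, (cut A α).Nonempty ↔ α ≤ lam := by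
  refine and_congr_right fun _ => ⟨?_, fun h => ?_⟩
  · rintro ⟨⟨x, rfl⟩, hle⟩ α -
    exact ⟨fun ⟨y, hy⟩ => hy.trans (hle y), fun hα => ⟨x, hα⟩⟩
  · have hle (y : X) : A y ≤ lam := by
      rcases le_or_gt (A y) 0 with hAy | hAy
      · exact hAy.trans hlam.le
      · exact (h (A y) hAy).1 ⟨y, le_refl (A y)⟩
    obtain ⟨x, hx⟩ := (h lam hlam).2 le_rfl
    exact ⟨⟨x, (hle x).antisymm hx⟩, hle⟩

end Cuts

section Zadeh

theorem zadeh_nonneg {T : X → X} {A : X → ℝ} (hA : ∀ x, 0 ≤ A x) (x : X) : 0 ≤ zadeh T A x :=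
  Real.sSup_nonneg (forall_mem_image.2 fun y _ => hA y)

theorem zadeh_le {T : X → X} {A : X → ℝ} {c : ℝ} (hc : 0 ≤ c) (hA : ∀ x, A x ≤ c) (x : X) :
    zadeh T A x ≤ c :=
  Real.sSup_le (forall_mem_image.2 fun y _ => hA y) hc

variable [TopologicalSpace X] [CompactSpace X] {T : X → X} {A : X → ℝ} {lam : ℝ}

/-- Off the range of `T`, `zadeh T A` takes the value `sSup ∅ = 0`. -/
theorem cut_zadeh [T1Space X] (hT : Continuous T) (hA : UpperSemicontinuous A) {α : ℝ}
    (hα : 0 < α) : cut (zadeh T A) α = T '' cut A α := by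
  ext x
  rcases (T ⁻¹' {x}).eq_empty_or_nonempty with hfibre | hfibre
  · have not_attained : x ∉ T '' cut A α := fun ⟨y, _, hyx⟩ =>
      hfibre.subset (show y ∈ T ⁻¹' {x} from hyx)
    have zadeh_eq_zero : zadeh T A x = 0 := by
      rw [zadeh, hfibre, image_empty, Real.sSup_empty]
    exact iff_of_false (by simpa [cut, zadeh_eq_zero] using hα) not_attained
  · obtain ⟨y, hyx, hy_max⟩ := UpperSemicontinuousOn.exists_isMaxOn hfibre
      (isClosed_singleton.preimage hT).isCompact (hA.upperSemicontinuousOn _)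
    have zadeh_eq : zadeh T A x = A y :=
      IsGreatest.csSup_eq ⟨mem_image_of_mem A hyx, forall_mem_image.2 hy_max⟩
    change α ≤ zadeh T A x ↔ _
    rw [zadeh_eq]
    exact ⟨fun hy => ⟨y, hy, hyx⟩, fun ⟨z, hz, hzx⟩ => le_trans hz (hy_max hzx)⟩

variable [T2Space X]

theorem isFuzzy_zadeh (hT : Continuous T) (hA : IsFuzzy A) : IsFuzzy (zadeh T A) := by
  have A_nonneg (x : X) : 0 ≤ A x := (hA.1 x).1
  refine ⟨fun x => ⟨zadeh_nonneg A_nonneg x, zadeh_le zero_le_one (fun y => (hA.1 y).2) x⟩,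
    (upperSemicontinuous_iff_isClosed_cut (zadeh_nonneg A_nonneg)).2 fun α hα => ?_⟩
  rw [cut_zadeh hT hA.2 hα]
  exact (((upperSemicontinuous_iff_isClosed_cut A_nonneg).1 hA.2 α hα).isCompact.image hT).isClosed

theorem mapsTo_zadeh_Feq (hT : Continuous T) (hlam : 0 < lam) :
    MapsTo (zadeh T) (Feq X lam) (Feq X lam) := by
  intro A hA
  rw [mem_Feq_iff_nonempty_cut hlam] at hA ⊢
  refine ⟨isFuzzy_zadeh hT hA.1, fun α hα => ?_⟩
  rw [cut_zadeh hT hA.1.2 hα, image_nonempty]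
  exact hA.2 α hα

end Zadeh

section LevelwiseMetric

variable [MetricSpace X]

theorem eHd_of_nonempty {K L : Set X} (hK : K.Nonempty) (hL : L.Nonempty) :
    eHd X K L = hausdorffDist K L :=
  if_pos (Or.inl ⟨hK, hL⟩)

theorem eHd_le_of_forall_exists_dist_le {K L : Set X} {r : ℝ} (hr : 0 ≤ r)
    (hKL : ∀ x ∈ K, ∃ y ∈ L, dist x y ≤ r) (hLK : ∀ y ∈ L, ∃ x ∈ K, dist y x ≤ r) :
    eHd X K L ≤ r := by
  have nonempty_or_empty : (K.Nonempty ∧ L.Nonempty) ∨ (K = ∅ ∧ L = ∅) := by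
    rcases K.eq_empty_or_nonempty with rfl | ⟨x, hx⟩
    · exact Or.inr ⟨rfl, eq_empty_of_forall_notMem fun y hy => by simpa using hLK y hy⟩
    · obtain ⟨y, hy, -⟩ := hKL x hx
      exact Or.inl ⟨⟨x, hx⟩, ⟨y, hy⟩⟩
  rw [eHd, if_pos nonempty_or_empty]
  exact hausdorffDist_le_of_mem_dist hr hKL hLK

theorem eHd_le_diam [BoundedSpace X] (K L : Set X) : eHd X K L ≤ diam (univ : Set X) := by
  rw [eHd]
  split_ifs with h
  · rcases h with ⟨hK, hL⟩ | ⟨rfl, rfl⟩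
    · exact (hausdorffDist_le_diam hK (.all K) hL (.all L)).trans
        (diam_mono (subset_univ _) (.all _))
    · simpa only [hausdorffDist_self_zero] using diam_nonneg
  · exact le_rfl

theorem eHd_cut_le_dinf [BoundedSpace X] (A B : X → ℝ) {α : ℝ} (hα : α ∈ Ioc (0 : ℝ) 1) :
    eHd X (cut A α) (cut B α) ≤ dinf A B := by
  refine le_csSup ⟨diam (univ : Set X), ?_⟩ ⟨α, hα, rfl⟩
  rintro _ ⟨β, -, rfl⟩
  exact eHd_le_diam _ _

theorem dinf_le_of_forall_exists_le {A B : X → ℝ} {r : ℝ} (hr : 0 ≤ r)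
    (hAB : ∀ x, 0 < A x → ∃ y, A x ≤ B y ∧ dist x y ≤ r)
    (hBA : ∀ y, 0 < B y → ∃ x, B y ≤ A x ∧ dist y x ≤ r) : dinf A B ≤ r := by
  refine Real.sSup_le ?_ hr
  rintro _ ⟨α, hα, rfl⟩
  refine eHd_le_of_forall_exists_dist_le hr (fun x hx => ?_) (fun y hy => ?_)
  · obtain ⟨y, hxy, hdist⟩ := hAB x (hα.1.trans_le hx)
    exact ⟨y, le_trans hx hxy, hdist⟩
  · obtain ⟨x, hyx, hdist⟩ := hBA y (hα.1.trans_le hy)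
    exact ⟨x, le_trans hy hyx, hdist⟩

end LevelwiseMetric

section StepFuzzy

variable {ι : Type*}

/-- The step fuzzy set of height `a i` on `C i`, the largest height winning on overlaps and the
value being `0` off all `C i`. It is meant for finite families and nonnegative heights. -/
noncomputable def stepFuzzy (C : ι → Set X) (a : ι → ℝ) (x : X) : ℝ :=
  ⨆ i, (C i).indicator (fun _ => a i) x

theorem stepFuzzy_nonneg (C : ι → Set X) {a : ι → ℝ} (ha : ∀ i, 0 ≤ a i) (x : X) :
    0 ≤ stepFuzzy C a x :=
  Real.iSup_nonneg fun i => indicator_nonneg (fun _ _ => ha i) x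

theorem stepFuzzy_le {C : ι → Set X} {a : ι → ℝ} {c : ℝ} (hc : 0 ≤ c) (ha : ∀ i, a i ≤ c) (x : X) :
    stepFuzzy C a x ≤ c :=
  Real.iSup_le (fun i => indicator_apply_le' (fun _ => ha i) fun _ => hc) hc

variable [Finite ι] {C : ι → Set X} {a : ι → ℝ}

theorem cut_stepFuzzy (C : ι → Set X) (a : ι → ℝ) {α : ℝ} (hα : 0 < α) :
    cut (stepFuzzy C a) α = ⋃ i ∈ {i | α ≤ a i}, C i := by
  ext x
  simp only [mem_iUnion, mem_ofPred_eq, exists_prop]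
  constructor
  · intro hx
    change α ≤ ⨆ i, (C i).indicator (fun _ => a i) x at hx
    rcases isEmpty_or_nonempty ι with _ | _
    · rw [Real.iSup_of_isEmpty] at hx
      exact absurd hx hα.not_ge
    obtain ⟨i, hi⟩ := exists_eq_ciSup_of_finite (f := fun i => (C i).indicator (fun _ => a i) x)
    rw [← hi] at hx
    have hxC : x ∈ C i := mem_of_indicator_ne_zero (hα.trans_le hx).ne'
    exact ⟨i, by rwa [indicator_of_mem hxC] at hx, hxC⟩
  · rintro ⟨i, hi, hxC⟩
    refine hi.trans (le_ciSup_of_le (finite_range _).bddAbove i ?_)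
    rw [indicator_of_mem hxC]

theorem upperSemicontinuous_stepFuzzy [TopologicalSpace X] (hC : ∀ i, IsClosed (C i))
    (ha : ∀ i, 0 ≤ a i) : UpperSemicontinuous (stepFuzzy C a) := by
  refine (upperSemicontinuous_iff_isClosed_cut (stepFuzzy_nonneg C ha)).2 fun α hα => ?_
  rw [cut_stepFuzzy C a hα]
  exact (toFinite _).isClosed_biUnion fun i _ => hC i

theorem stepFuzzy_mem_Feq [TopologicalSpace X] {lam : ℝ} (hlam : lam ∈ Ioc (0 : ℝ) 1)
    (hC : ∀ i, IsClosed (C i)) (hCne : ∀ i, (C i).Nonempty) (ha : ∀ i, 0 ≤ a i)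
    (hmax : IsGreatest (range a) lam) : stepFuzzy C a ∈ Feq X lam := by
  have a_le (i : ι) : a i ≤ lam := hmax.2 (mem_range_self i)
  have isFuzzy : IsFuzzy (stepFuzzy C a) :=
    ⟨fun x => ⟨stepFuzzy_nonneg C ha x, (stepFuzzy_le hlam.1.le a_le x).trans hlam.2⟩,
      upperSemicontinuous_stepFuzzy hC ha⟩
  refine (mem_Feq_iff_nonempty_cut hlam.1).2 ⟨isFuzzy, fun α hα => ?_⟩
  rw [cut_stepFuzzy C a hα, nonempty_biUnion]
  obtain ⟨i, rfl⟩ := hmax.1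
  exact ⟨fun ⟨j, hj, _⟩ => le_trans hj (a_le j), fun hαi => ⟨i, hαi, hCne i⟩⟩

section Zadeh

variable [TopologicalSpace X] [CompactSpace X] [T2Space X] {T : X → X}

theorem zadeh_stepFuzzy (hT : Continuous T) (hC : ∀ i, IsClosed (C i)) (ha : ∀ i, 0 ≤ a i) :
    zadeh T (stepFuzzy C a) = stepFuzzy (fun i => T '' C i) a := by
  refine eq_of_forall_cut_eq (zadeh_nonneg (stepFuzzy_nonneg C ha)) (stepFuzzy_nonneg _ ha)
    fun α hα => ?_
  rw [cut_zadeh hT (upperSemicontinuous_stepFuzzy hC ha) hα, cut_stepFuzzy C a hα,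
    cut_stepFuzzy _ a hα, image_iUnion₂]

theorem zadeh_iterate_stepFuzzy (hT : Continuous T) (hC : ∀ i, IsClosed (C i))
    (ha : ∀ i, 0 ≤ a i) (n : ℕ) :
    (zadeh T)^[n] (stepFuzzy C a) = stepFuzzy (fun i => T^[n] '' C i) a := by
  induction n with
  | zero => simp
  | succ n ih =>
    have image_closed (i : ι) : IsClosed (T^[n] '' C i) :=
      ((hC i).isCompact.image (hT.iterate n)).isClosed
    simp only [iterate_succ_apply', ih, zadeh_stepFuzzy hT image_closed ha, image_image]

end Zadeh

end StepFuzzy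

section TopCut

variable [TopologicalSpace X] [CompactSpace X] {lam : ℝ}

/-- The highest nonempty cut of a fuzzy set with maximum `lam`, as a point of the hyperspace. -/
def topCut (A : Feq X lam) : NonemptyCompacts X where
  carrier := cut A lam
  isCompact' := (upperSemicontinuous_iff_isClosed_preimage.1 A.2.1.2 lam).isCompact
  nonempty' := A.2.2.1.imp fun _ hx => hx.ge

theorem topCut_surjective [T2Space X] (hlam : lam ∈ Ioc (0 : ℝ) 1) :
    Surjective (topCut : Feq X lam → NonemptyCompacts X) := by
  intro K
  have step_mem : stepFuzzy (fun _ : Unit => (K : Set X)) (fun _ => lam) ∈ Feq X lam :=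
    stepFuzzy_mem_Feq hlam (fun _ => K.isCompact.isClosed) (fun _ => K.nonempty)
      (fun _ => hlam.1.le) (by simp)
  refine ⟨⟨_, step_mem⟩, SetLike.coe_injective ?_⟩
  change cut _ lam = (K : Set X)
  simp [cut_stepFuzzy _ _ hlam.1, iUnion_const]

theorem semiconj_topCut [T2Space X] {T : X → X} (hT : Continuous T) (hlam : 0 < lam) :
    Semiconj (topCut : Feq X lam → NonemptyCompacts X)
      ((mapsTo_zadeh_Feq hT hlam).restrict (zadeh T) _ _) (hyper T hT) :=
  fun A => SetLike.coe_injective (cut_zadeh hT A.2.1.2 hlam)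

end TopCut

section Skeleton

/-- Points `x i` with heights `a i` that approximate the fuzzy set `A`: every cut `[A]_α`, `α > 0`,
is within Hausdorff distance `δ` of `{x i | α ≤ a i}`. The two conditions express this without
mentioning `α`. -/
structure IsSkeleton [MetricSpace X] {ι : Type*} (A : X → ℝ) (δ : ℝ) (x : ι → X) (a : ι → ℝ) :
    Prop where
  nonneg : ∀ i, 0 ≤ a i
  exists_height_le : ∀ i, ∃ y, a i ≤ A y ∧ dist (x i) y ≤ δ
  exists_le_height : ∀ y, ∃ i, A y ≤ a i ∧ dist y (x i) ≤ δ

variable [MetricSpace X] {ι : Type*} {A B : X → ℝ} {lam δ : ℝ} {x : ι → X} {a : ι → ℝ}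

theorem IsSkeleton.isGreatest_range (h : IsSkeleton A δ x a) (hA : A ∈ Feq X lam) :
    IsGreatest (range a) lam := by
  have a_le (i : ι) : a i ≤ lam := by
    obtain ⟨y, hy, -⟩ := h.exists_height_le i
    exact hy.trans (hA.2.2 y)
  obtain ⟨y, hy⟩ := hA.2.1
  obtain ⟨i, hi, -⟩ := h.exists_le_height y
  exact ⟨⟨i, (a_le i).antisymm (hy ▸ hi)⟩, forall_mem_range.2 a_le⟩

theorem IsSkeleton.dinf_stepFuzzy_le [Finite ι] (h : IsSkeleton A δ x a) {η : ℝ}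
    (hr : 0 ≤ η + δ) {C : ι → Set X} (hCne : ∀ i, (C i).Nonempty)
    (hC : ∀ i, C i ⊆ closedBall (x i) η) : dinf (stepFuzzy C a) A ≤ η + δ := by
  refine dinf_le_of_forall_exists_le hr (fun z hz => ?_) (fun y hy => ?_)
  · have hz_cut : z ∈ cut (stepFuzzy C a) (stepFuzzy C a z) := le_refl (stepFuzzy C a z)
    simp only [cut_stepFuzzy C a hz, mem_iUnion] at hz_cut
    obtain ⟨i, hi, hzC⟩ := hz_cut
    obtain ⟨y, hy, hdist⟩ := h.exists_height_le i
    exact ⟨y, le_trans hi hy, (dist_triangle z (x i) y).trans (add_le_add (hC i hzC) hdist)⟩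
  · obtain ⟨i, hi, hdist⟩ := h.exists_le_height y
    obtain ⟨z, hzC⟩ := hCne i
    have hz_cut : z ∈ cut (stepFuzzy C a) (A y) := by
      rw [cut_stepFuzzy C a hy]
      exact mem_biUnion hi hzC
    refine ⟨z, hz_cut, ?_⟩
    calc dist y z ≤ dist z (x i) + dist y (x i) := by
          rw [add_comm]
          exact dist_triangle_right y z (x i)
      _ ≤ η + δ := add_le_add (hC i hzC) hdist

theorem exists_isSkeleton [CompactSpace X] (hA : UpperSemicontinuous A) (hA0 : ∀ x, 0 ≤ A x)
    (hδ : 0 < δ) : ∃ (t : Finset X) (a : t → ℝ), IsSkeleton A δ ((↑) : t → X) a := by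
  obtain ⟨t, -, ht, hcover⟩ := finite_cover_balls_of_compact (isCompact_univ (X := X)) hδ
  -- The height at `x` is the maximum of `A` over the closed `δ`-ball around `x`.
  have exists_peak (x : X) : ∃ p ∈ closedBall x δ, IsMaxOn A (closedBall x δ) p :=
    UpperSemicontinuousOn.exists_isMaxOn ⟨x, mem_closedBall_self hδ.le⟩
      isClosed_closedBall.isCompact (hA.upperSemicontinuousOn _)
  choose peak hpeak hpeak_max using exists_peak
  refine ⟨ht.toFinset, fun x => A (peak x), fun x => hA0 _, fun x => ?_, fun y => ?_⟩
  · exact ⟨peak x, le_rfl, mem_closedBall'.1 (hpeak x)⟩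
  · obtain ⟨x, hxt, hyx⟩ := mem_iUnion₂.1 (hcover (mem_univ y))
    exact ⟨⟨x, ht.mem_toFinset.2 hxt⟩, hpeak_max x (ball_subset_closedBall hyx),
      (mem_ball.1 hyx).le⟩

theorem exists_isSkeleton_common_heights [CompactSpace X] (hA : A ∈ Feq X lam)
    (hB : B ∈ Feq X lam) (hδ : 0 < δ) : ∃ (s t : Finset X) (a : s × t → ℝ),
      IsSkeleton A δ (fun i => (i.1 : X)) a ∧ IsSkeleton B δ (fun i => (i.2 : X)) a := by
  obtain ⟨s, b, hb⟩ := exists_isSkeleton hA.1.2 (fun x => (hA.1.1 x).1) hδ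
  obtain ⟨t, c, hc⟩ := exists_isSkeleton hB.1.2 (fun x => (hB.1.1 x).1) hδ
  obtain ⟨i₀, hi₀⟩ := (hb.isGreatest_range hA).1
  obtain ⟨j₀, hj₀⟩ := (hc.isGreatest_range hB).1
  -- Pairs of points get the smaller of the two heights; pairing with an index of full height `lam`
  -- does not lower the height of the other point.
  have min_nonneg (i : s × t) : 0 ≤ min (b i.1) (c i.2) := le_min (hb.nonneg _) (hc.nonneg _)
  refine ⟨s, t, fun i => min (b i.1) (c i.2), ⟨min_nonneg, fun i => ?_, fun y => ?_⟩,
    ⟨min_nonneg, fun i => ?_, fun y => ?_⟩⟩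
  · obtain ⟨y, hy, hdist⟩ := hb.exists_height_le i.1
    exact ⟨y, (min_le_left _ _).trans hy, hdist⟩
  · obtain ⟨i, hi, hdist⟩ := hb.exists_le_height y
    exact ⟨(i, j₀), le_min hi (hj₀ ▸ hA.2.2 y), hdist⟩
  · obtain ⟨y, hy, hdist⟩ := hc.exists_height_le i.2
    exact ⟨y, (min_le_right _ _).trans hy, hdist⟩
  · obtain ⟨j, hj, hdist⟩ := hc.exists_le_height y
    exact ⟨(i₀, j), le_min (hi₀ ▸ hB.2.2 y) hj, hdist⟩

end Skeleton

section Devaney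

variable [MetricSpace X] [CompactSpace X] {T : X → X} {lam : ℝ}

theorem transOn_zadeh_of_topWeakMix (hT : Continuous T) (hmix : TopWeakMix T)
    (hlam : lam ∈ Ioc (0 : ℝ) 1) : TransOn dinf (zadeh T) (Feq X lam) := by
  intro A hA B hB ε hε
  have hδ : 0 < ε / 3 := by positivity
  obtain ⟨s, t, a, hxA, hyB⟩ := exists_isSkeleton_common_heights hA hB hδ
  obtain ⟨n, hn⟩ := hmix.exists_forall_mem_hitTimes hT
    (U := fun i : s × t => ball (i.1 : X) (ε / 3)) (V := fun i => ball (i.2 : X) (ε / 3))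
    (fun _ => isOpen_ball) (fun _ => isOpen_ball)
    (fun _ => nonempty_ball.2 hδ) (fun _ => nonempty_ball.2 hδ)
  choose z hzx hzy using hn
  have E_mem : stepFuzzy (fun i => {z i}) a ∈ Feq X lam :=
    stepFuzzy_mem_Feq hlam (fun _ => isClosed_singleton) (fun _ => singleton_nonempty _) hxA.nonneg
      (hxA.isGreatest_range hA)
  have two_thirds_lt : ε / 3 + ε / 3 < ε := by linarith
  refine ⟨n, _, E_mem, ?_, ?_⟩
  · exact (hxA.dinf_stepFuzzy_le (by positivity) (fun _ => singleton_nonempty _)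
      fun i => singleton_subset_iff.2 (ball_subset_closedBall (hzx i))).trans_lt two_thirds_lt
  · rw [zadeh_iterate_stepFuzzy hT (fun _ => isClosed_singleton) hxA.nonneg]
    simp only [image_singleton]
    exact (hyB.dinf_stepFuzzy_le (by positivity) (fun _ => singleton_nonempty _)
      fun i => singleton_subset_iff.2 (ball_subset_closedBall (hzy i))).trans_lt two_thirds_lt

theorem exists_periodic_zadeh_dinf_lt {hT : Continuous T}
    (h : Dense (periodicPts (hyper T hT))) (hlam : lam ∈ Ioc (0 : ℝ) 1) {A : X → ℝ}
    (hA : A ∈ Feq X lam) {ε : ℝ} (hε : 0 < ε) :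
    ∃ P ∈ Feq X lam, (∃ n, 1 ≤ n ∧ (zadeh T)^[n] P = P) ∧ dinf P A < ε := by
  have hδ : 0 < ε / 3 := by positivity
  obtain ⟨t, a, ha⟩ := exists_isSkeleton hA.1.2 (fun x => (hA.1.1 x).1) hδ
  choose K hK_periodic hK_ball using fun x : t =>
    exists_coe_subset_of_dense h isOpen_ball (nonempty_ball (x := (x : X)).2 hδ)
  obtain ⟨n, hn, hn_period⟩ := exists_common_period hK_periodic
  have image_eq (x : t) : T^[n] '' (K x : Set X) = K x := by
    rw [← coe_hyper_iterate (hT := hT), (hn_period x).eq]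
  have K_closed (x : t) : IsClosed (K x : Set X) := (K x).isCompact.isClosed
  have K_nonempty (x : t) : (K x : Set X).Nonempty := (K x).nonempty
  refine ⟨stepFuzzy (fun x => K x) a,
    stepFuzzy_mem_Feq hlam K_closed K_nonempty ha.nonneg (ha.isGreatest_range hA), ⟨n, hn, ?_⟩, ?_⟩
  · rw [zadeh_iterate_stepFuzzy hT K_closed ha.nonneg]
    simp only [image_eq]
  · exact (ha.dinf_stepFuzzy_le (by positivity) K_nonempty
      fun x => (hK_ball x).trans ball_subset_closedBall).trans_lt (by linarith)

theorem devaneyOn_zadeh_of_devaneyTop_hyper {hT : Continuous T} (h : DevaneyTop (hyper T hT))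
    (hlam : lam ∈ Ioc (0 : ℝ) 1) : DevaneyOn dinf (zadeh T) (Feq X lam) := by
  have periodic_dense : Dense (periodicPts (hyper T hT)) := h.2
  have mixing : TopWeakMix T :=
    topWeakMix_of_topTrans_hyper h.1 (denseRange_of_dense_periodicPts_hyper periodic_dense)
  exact ⟨transOn_zadeh_of_topWeakMix hT mixing hlam,
    fun _ hA _ hε => exists_periodic_zadeh_dinf_lt periodic_dense hlam hA hε⟩

theorem dist_topCut_le_dinf (hlam : lam ∈ Ioc (0 : ℝ) 1) (A B : Feq X lam) :
    dist (topCut A) (topCut B) ≤ dinf (A : X → ℝ) B := by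
  rw [NonemptyCompacts.dist_eq, ← eHd_of_nonempty (topCut A).nonempty (topCut B).nonempty]
  exact eHd_cut_le_dinf _ _ hlam

theorem devaneyTop_hyper_of_devaneyOn_zadeh (hT : Continuous T) (hlam : lam ∈ Ioc (0 : ℝ) 1)
    (h : DevaneyOn dinf (zadeh T) (Feq X lam)) : DevaneyTop (hyper T hT) :=
  h.devaneyTop_of_semiconj (mapsTo_zadeh_Feq hT hlam.1) (topCut_surjective hlam)
    (dist_topCut_le_dinf hlam) (semiconj_topCut hT hlam.1)

end Devaney

theorem devaney_tfae_general {X : Type*} [MetricSpace X] [CompactSpace X] (T : X → X)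
    (hT : Continuous T) :
    List.TFAE
      [DevaneyTop (hyper T hT),
       ∀ lam ∈ Ioc (0 : ℝ) 1, DevaneyOn dinf (zadeh T) (Feq X lam),
       ∃ lam ∈ Ioc (0 : ℝ) 1, DevaneyOn dinf (zadeh T) (Feq X lam)] := by
  tfae_have 1 → 2 := fun h _ hlam => devaneyOn_zadeh_of_devaneyTop_hyper h hlam
  tfae_have 2 → 3 := fun h => ⟨1, by simp, h 1 (by simp)⟩
  tfae_have 3 → 1 := fun ⟨_, hlam, h⟩ => devaneyTop_hyper_of_devaneyOn_zadeh hT hlam h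
  tfae_finish

/-- Devaney chaos of `(K(X), T_K)` is equivalent to Devaney chaos of the Zadeh extension
on every (equivalently, some) `𝔽^{=λ}(X)`. -/
theorem devaney_tfae {X : Type*} [MetricSpace X] [CompactSpace X] [Nontrivial X]
    (T : X → X) (hT : Continuous T) (hTs : Function.Surjective T) :
    List.TFAE
      [DevaneyTop (hyper T hT),
       ∀ lam ∈ Set.Ioc (0:ℝ) 1, DevaneyOn dinf (zadeh T) (Feq X lam),
       ∃ lam ∈ Set.Ioc (0:ℝ) 1, DevaneyOn dinf (zadeh T) (Feq X lam)] :=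
  devaney_tfae_general T hT
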